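/- Assume k is algebraically closed. Let E = {Z_1,…,Z_r} be pairwise non-proportional homogeneous linear forms in S that are generic, i.e. every subset of E with at most n elements is linearly independent, and suppose each Q_j ∈ 𝒜 has the form Q_j = ∏_{i=1}^r Z_i^{a_{ij}} for nonnegative integers a_{ij}. Let S̃ = k[y_1,…,y_r], let Q̃_j = ∏_{i=1}^r y_i^{a_{ij}}, and let Ĩ ⊆ S̃ be the ideal generated by Q̃_1,…,Q̃_m. Then the Taylor complex of 𝒜 is a resolution of S/I if and only if Tor_p^{S̃}(S̃/Ĩ, k) = 0 for all p ≥ n+1, where k is regarded as the S̃-module S̃/(y_1,…,y_r). -/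

import Mathlib

open Finset

noncomputable section

/-- Degree-`p` term of the Taylor complex: the free `S`-module on the `p`-element
subsets of the index set `Fin m`. -/
abbrev TaylorMod (k : Type) [Field k] (n m p : ℕ) : Type :=
  {σ : Finset (Fin m) // σ.card = p} →₀ MvPolynomial (Fin n) k

/-- The Taylor differential, sending a `p`-element subset `σ` to
`∑_{i ∈ σ} (-1)^{ε(σ,i)} (Q_σ / Q_{σ∖{i}}) (σ∖{i})`, where `c σ i` is the quotient
`Q_σ / Q_{σ∖{i}}`. -/
def taylorD (k : Type) [Field k] (n m : ℕ)
    (c : Finset (Fin m) → Fin m → MvPolynomial (Fin n) k) (p : ℕ) :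
    TaylorMod k n m p →ₗ[MvPolynomial (Fin n) k] TaylorMod k n m (p - 1) :=
  Finsupp.lsum (MvPolynomial (Fin n) k) fun σ =>
    LinearMap.toSpanSingleton _ _
      (∑ i ∈ σ.1.attach,
        Finsupp.single
          ⟨σ.1.erase i.1, by rw [Finset.card_erase_of_mem i.2, σ.2]⟩
          ((-1) ^ (σ.1.filter (fun j => j < i.1)).card * c σ.1 i.1))

/-- The identification of the degree-`0` term of the Taylor complex with `S`. -/
def taylorAug (k : Type) [Field k] (n m : ℕ) :
    TaylorMod k n m 0 →ₗ[MvPolynomial (Fin n) k] MvPolynomial (Fin n) k :=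
  Finsupp.lsum (MvPolynomial (Fin n) k) fun _ => LinearMap.id

/-- The Taylor complex (built from the quotient data `c`) is a resolution of `S/I`:
it is exact in all degrees `p ≥ 1` and the image of its first differential is the
ideal generated by `Q`. -/
def IsTaylorResolution (k : Type) [Field k] (n m : ℕ) (Q : Fin m → MvPolynomial (Fin n) k)
    (c : Finset (Fin m) → Fin m → MvPolynomial (Fin n) k) : Prop :=
  (∀ p : ℕ, 1 ≤ p →
      LinearMap.ker (taylorD k n m c p) = LinearMap.range (taylorD k n m c (p + 1))) ∧
  Submodule.map (taylorAug k n m) (LinearMap.range (taylorD k n m c 1)) =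
    Ideal.span (Set.range Q)

end

/-!
Outside the origin of `kⁿ` fewer than `n` of the generic forms `Z_i` vanish. These belong to a
coordinate system and the other forms are local units, so by Taylor's theorem on monomials the
homology of the Taylor complex in positive degrees is supported at the origin.
Cutting down by the regular sequence `x_1, …, x_n` shows that the complex is then exact in all
positive degrees if and only if its reduction modulo `(x_1, …, x_n)` is exact in degrees `> n`: in
a highest degree carrying homology, that homology has a nonzero socle, which connecting
homomorphisms embed into the homology of the reduction `n` degrees higher. Over `k` all forms
become `0`, so the reduction depends only on the exponents `a` and agrees with the reduction of the
Taylor complex of the monomials `Q̃_j`, whose homology is `Tor(S̃/Ĩ, k)`.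
-/

section Boundary

variable {ι R R' : Type*} [CommRing R] [CommRing R'] {c : Finset ι → ι → R}
  {c' : Finset ι → ι → R'} {N N' : Type*} [AddCommGroup N] [Module R N] [AddCommGroup N']
  [Module R' N'] {p : ℕ}

variable (ι R N) in
/-- The degree `p` chains of the Taylor complex with coefficients in `N`: a chain is its family of
coordinates, and the coordinates at subsets of the wrong cardinality vanish. -/
def taylorChains (p : ℕ) : Submodule R (Finset ι → N) where
  carrier := {f | ∀ σ, #σ ≠ p → f σ = 0}
  zero_mem' _ _ := rfl
  add_mem' hf hg σ hσ := by simp [hf σ hσ, hg σ hσ]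
  smul_mem' x f hf σ hσ := by simp [hf σ hσ]

/-- The component of a Taylor chain in degree `p`. -/
def taylorTrunc (p : ℕ) (f : Finset ι → N) : Finset ι → N := fun σ => if #σ = p then f σ else 0

variable (R) in
lemma taylorTrunc_mem (p : ℕ) (f : Finset ι → N) :
    taylorTrunc p f ∈ taylorChains ι R N p := fun _ h => if_neg h

lemma taylorTrunc_of_mem {f : Finset ι → N} (hf : f ∈ taylorChains ι R N p) :
    taylorTrunc p f = f := by
  ext σ
  unfold taylorTrunc
  split_ifs with h
  · rfl
  · exact (hf σ h).symm

variable [LinearOrder ι]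

/-- The sign `(-1) ^ ε(τ ∪ {i}, i)` of `τ` in the boundary of `τ ∪ {i}`, for `i ∉ τ`. -/
def insertSign (τ : Finset ι) (i : ι) : ℤ := (-1) ^ #{j ∈ τ | j < i}

lemma insertSign_mul_self (τ : Finset ι) (i : ι) : insertSign τ i * insertSign τ i = 1 := by
  rw [insertSign, ← mul_pow, neg_one_mul, neg_neg, one_pow]

lemma insertSign_insert {τ : Finset ι} {i : ι} (hi : i ∉ τ) (j : ι) :
    insertSign (insert i τ) j = if i < j then -insertSign τ j else insertSign τ j := by
  unfold insertSign
  rw [filter_insert]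
  split_ifs
  · rw [card_insert_of_notMem (by simp [hi]), pow_succ, mul_neg_one]
  · rfl

lemma insertSign_mul_insertSign_insert {τ : Finset ι} {i j : ι} (hi : i ∉ τ) (hj : j ∉ τ)
    (hij : i ≠ j) :
    insertSign τ i * insertSign (insert i τ) j = -(insertSign τ j * insertSign (insert j τ) i) := by
  rw [insertSign_insert hi, insertSign_insert hj]
  rcases hij.lt_or_gt with h | h <;> rw [if_pos h, if_neg h.asymm] <;> ring

lemma insertSign_insert_mul_insertSign_insert {τ : Finset ι} {i j : ι} (hi : i ∉ τ) (hj : j ∉ τ)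
    (hij : i ≠ j) :
    insertSign (insert j τ) i * insertSign (insert i τ) j = -(insertSign τ j * insertSign τ i) := by
  rw [insertSign_insert hi, insertSign_insert hj]
  rcases hij.lt_or_gt with h | h <;> rw [if_pos h, if_neg h.asymm] <;> ring

variable [Fintype ι]

variable (c N) in
/-- The differential of the Taylor complex with coefficients in the module `N`, all degrees at once.
Up to sign, `c σ i` is the coefficient of `σ \ {i}` in the boundary of `σ`. -/
def taylorBoundary : (Finset ι → N) →ₗ[R] (Finset ι → N) where
  toFun f τ := ∑ i ∈ τᶜ, insertSign τ i • c (insert i τ) i • f (insert i τ)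
  map_add' f g := by ext τ; simp only [Pi.add_apply, smul_add, sum_add_distrib]
  map_smul' x f := by
    ext τ
    simp only [Pi.smul_apply, RingHom.id_apply, smul_sum, smul_comm x]

lemma taylorBoundary_apply (f : Finset ι → N) (τ : Finset ι) :
    taylorBoundary c N f τ = ∑ i ∈ τᶜ, insertSign τ i • c (insert i τ) i • f (insert i τ) := rfl

variable (c N) in
/-- The Taylor complex with coefficients in `N` is exact in degree `p`. -/
def TaylorExactAt (p : ℕ) : Prop :=
  ∀ f ∈ taylorChains ι R N p, taylorBoundary c N f = 0 → f ∈ LinearMap.range (taylorBoundary c N)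

lemma taylorBoundary_single (σ : Finset ι) (x : N) :
    taylorBoundary c N (Pi.single σ x) =
      ∑ i ∈ σ, Pi.single (σ.erase i) (insertSign (σ.erase i) i • c σ i • x) := by
  ext τ
  simp only [taylorBoundary_apply, Finset.sum_apply, Pi.single_apply, smul_ite, smul_zero]
  rw [← sum_filter, ← sum_filter]
  have hindex : {i ∈ τᶜ | insert i τ = σ} = {i ∈ σ | τ = σ.erase i} := by
    ext i
    simp only [mem_filter, mem_compl]
    constructor
    · rintro ⟨hi, rfl⟩
      exact ⟨mem_insert_self i τ, (erase_insert hi).symm⟩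
    · rintro ⟨hi, rfl⟩
      exact ⟨notMem_erase i σ, insert_erase hi⟩
  rw [hindex]
  refine sum_congr rfl fun i hi => ?_
  obtain ⟨hiσ, rfl⟩ := mem_filter.1 hi
  rw [insert_erase hiσ]

lemma taylorBoundary_trunc (f : Finset ι → N) :
    taylorBoundary c N (taylorTrunc (p + 1) f) = taylorTrunc p (taylorBoundary c N f) := by
  ext τ
  have hcard : ∀ i ∈ τᶜ, #(insert i τ) = #τ + 1 := fun i hi =>
    card_insert_of_notMem (mem_compl.1 hi)
  by_cases h : #τ = p
  · simp only [taylorTrunc, h, if_true, taylorBoundary_apply]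
    refine sum_congr rfl fun i hi => ?_
    rw [if_pos (by rw [hcard i hi, h])]
  · simp only [taylorTrunc, h, if_false, taylorBoundary_apply]
    refine sum_eq_zero fun i hi => ?_
    rw [if_neg (by rw [hcard i hi]; omega), smul_zero, smul_zero]

lemma taylorBoundary_mem {f : Finset ι → N} (hf : f ∈ taylorChains ι R N (p + 1)) :
    taylorBoundary c N f ∈ taylorChains ι R N p := by
  rw [← taylorTrunc_of_mem hf, taylorBoundary_trunc]
  exact taylorTrunc_mem R _ _

lemma exists_mem_chains_of_mem_range {f : Finset ι → N} (hf : f ∈ taylorChains ι R N p)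
    (h : f ∈ LinearMap.range (taylorBoundary c N)) :
    ∃ g ∈ taylorChains ι R N (p + 1), taylorBoundary c N g = f := by
  obtain ⟨g, rfl⟩ := h
  exact ⟨taylorTrunc (p + 1) g, taylorTrunc_mem R _ _, by
    rw [taylorBoundary_trunc, taylorTrunc_of_mem hf]⟩

lemma taylorExactAt_of_card_lt (hp : Fintype.card ι < p) : TaylorExactAt c N p := by
  intro f hf _
  have hf0 : f = 0 := funext fun σ => hf σ ((card_le_univ σ).trans_lt hp).ne
  exact hf0 ▸ zero_mem _

lemma taylorBoundary_map (e : Finset ι → N →+ N')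
    (he : ∀ τ, ∀ i ∉ τ, ∀ x,
      e τ (c (insert i τ) i • x) = c' (insert i τ) i • e (insert i τ) x)
    (f : Finset ι → N) :
    taylorBoundary c' N' (fun σ => e σ (f σ)) = fun σ => e σ (taylorBoundary c N f σ) := by
  ext τ
  simp only [taylorBoundary_apply, map_sum, map_zsmul]
  exact sum_congr rfl fun i hi => by rw [he τ i (mem_compl.1 hi)]

lemma taylorBoundary_rescale {c' : Finset ι → ι → R} (w : Finset ι → R)
    (hw : ∀ τ, ∀ i ∉ τ, w τ * c (insert i τ) i = c' (insert i τ) i * w (insert i τ))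
    (f : Finset ι → N) :
    taylorBoundary c' N (fun σ => w σ • f σ) = fun σ => w σ • taylorBoundary c N f σ :=
  taylorBoundary_map (fun σ => DistribSMul.toAddMonoidHom N (w σ))
    (fun τ i hi x => by simp only [DistribSMul.toAddMonoidHom_apply, smul_smul, hw τ i hi]) f

lemma TaylorExactAt.of_equiv (e : Finset ι → N ≃+ N')
    (he : ∀ τ, ∀ i ∉ τ, ∀ x,
      e τ (c (insert i τ) i • x) = c' (insert i τ) i • e (insert i τ) x)
    (h : TaylorExactAt c' N' p) : TaylorExactAt c N p := by
  intro f hf hdf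
  obtain ⟨g, hg⟩ := h (fun σ => e σ (f σ)) (fun σ hσ => by simp [hf σ hσ])
    ((taylorBoundary_map (fun σ => (e σ).toAddMonoidHom) he f).trans (by ext; simp [hdf]))
  refine ⟨fun σ => (e σ).symm (g σ), funext fun σ => (e σ).injective ?_⟩
  have h := taylorBoundary_map (fun σ => (e σ).toAddMonoidHom) he fun σ => (e σ).symm (g σ)
  simpa [hg] using (congrFun h σ).symm

lemma taylorExactAt_congr (e : Finset ι → N ≃+ N')
    (he : ∀ τ, ∀ i ∉ τ, ∀ x,
      e τ (c (insert i τ) i • x) = c' (insert i τ) i • e (insert i τ) x) :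
    TaylorExactAt c N p ↔ TaylorExactAt c' N' p :=
  ⟨.of_equiv (fun σ => (e σ).symm) fun τ i hi x => (e τ).injective (by simp [he τ i hi]),
    .of_equiv e he⟩

/-- The commutation condition on the coefficients under which consecutive boundaries compose to
zero. -/
def IsTaylorCoeff (c : Finset ι → ι → R) : Prop :=
  ∀ τ i j, i ∉ τ → j ∉ τ → i ≠ j →
    c (insert i τ) i * c (insert j (insert i τ)) j = c (insert j τ) j * c (insert i (insert j τ)) i

lemma taylorBoundary_taylorBoundary (hc : IsTaylorCoeff c) (f : Finset ι → N) :
    taylorBoundary c N (taylorBoundary c N f) = 0 := by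
  ext τ
  simp only [taylorBoundary_apply, smul_sum, Pi.zero_apply]
  rw [sum_sigma']
  refine sum_involution (fun x _ => ⟨x.2, x.1⟩) ?_ ?_ ?_ (fun _ _ => rfl) <;>
    rintro ⟨i, j⟩ hx <;>
    obtain ⟨hi, hji, hj⟩ : i ∉ τ ∧ j ≠ i ∧ j ∉ τ := by simpa using hx
  · dsimp only
    rw [smul_comm (c (insert i τ) i), smul_comm (c (insert j τ) j), smul_smul, smul_smul, smul_smul,
      smul_smul, hc τ i j hi hj hji.symm, insertSign_mul_insertSign_insert hi hj hji.symm,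
      insert_comm j i, neg_smul, neg_add_cancel]
  · rintro - h
    exact hji (congrArg Sigma.fst h)
  · simpa [hi, hj] using hji.symm

end Boundary

section ExactSequences

variable {ι R N₁ N₂ N₃ : Type*} [CommRing R] [AddCommGroup N₁] [AddCommGroup N₂] [AddCommGroup N₃]
  [Module R N₁] [Module R N₂] [Module R N₃] {α : N₁ →ₗ[R] N₂} {β : N₂ →ₗ[R] N₃} {p : ℕ}

lemma exact_compLeft (hex : Function.Exact α β) (I : Type*) :
    Function.Exact (α.compLeft I) (β.compLeft I) := by
  rw [LinearMap.exact_iff] at hex ⊢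
  rw [LinearMap.ker_compLeft, LinearMap.range_compLeft, hex]

lemma compLeft_mem_taylorChains {f : Finset ι → N₁} (hf : f ∈ taylorChains ι R N₁ p) :
    α.compLeft _ f ∈ taylorChains ι R N₂ p := fun σ hσ => by simp [hf σ hσ]

lemma exists_mem_chains_compLeft_eq (hβ : Function.Surjective β) {f : Finset ι → N₃}
    (hf : f ∈ taylorChains ι R N₃ p) : ∃ F ∈ taylorChains ι R N₂ p, β.compLeft _ F = f := by
  obtain ⟨F, rfl⟩ := hβ.comp_left f
  refine ⟨taylorTrunc p F, taylorTrunc_mem R _ _, ?_⟩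
  rw [← taylorTrunc_of_mem hf]
  ext σ
  simp [taylorTrunc, apply_ite β]

variable [LinearOrder ι] [Fintype ι] {c : Finset ι → ι → R}

lemma taylorBoundary_compLeft (f : Finset ι → N₁) :
    taylorBoundary c N₂ (α.compLeft _ f) = α.compLeft _ (taylorBoundary c N₁ f) :=
  taylorBoundary_map (fun _ => α.toAddMonoidHom) (fun _ _ _ x => α.map_smul _ x) f

/- The two halves of the usual diagram chase for the connecting homomorphism, which sends the
class of `β F` to the class of `G` whenever `α G` is the boundary of `F`. -/

lemma mem_range_of_connecting_mem_range (hc : IsTaylorCoeff c) (hα : Function.Injective α)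
    (hβ : Function.Surjective β) (hex : Function.Exact α β) {G : Finset ι → N₁} {F : Finset ι → N₂}
    (hGF : α.compLeft _ G = taylorBoundary c N₂ F)
    (hF : β.compLeft _ F ∈ LinearMap.range (taylorBoundary c N₃)) :
    G ∈ LinearMap.range (taylorBoundary c N₁) := by
  obtain ⟨h, hh⟩ := hF
  obtain ⟨H, rfl⟩ : ∃ H, β.compLeft _ H = h := hβ.comp_left h
  obtain ⟨K, hK⟩ := (exact_compLeft hex _ (F - taylorBoundary c N₂ H)).1 (by
    rw [map_sub, ← taylorBoundary_compLeft, hh, sub_self])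
  refine ⟨K, hα.comp_left (?_ : α.compLeft _ _ = α.compLeft _ _)⟩
  rw [← taylorBoundary_compLeft, hK, map_sub, taylorBoundary_taylorBoundary hc, sub_zero, hGF]

lemma compLeft_mem_range_of_connecting_eq (hex : Function.Exact α β)
    (h₂ : TaylorExactAt c N₂ p) {K : Finset ι → N₁} (hK : K ∈ taylorChains ι R N₁ p)
    {F : Finset ι → N₂} (hF : F ∈ taylorChains ι R N₂ p)
    (hKF : α.compLeft _ (taylorBoundary c N₁ K) = taylorBoundary c N₂ F) :
    β.compLeft _ F ∈ LinearMap.range (taylorBoundary c N₃) := by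
  obtain ⟨M, hM⟩ := h₂ (F - α.compLeft _ K) (sub_mem hF (compLeft_mem_taylorChains hK)) (by
    rw [map_sub, taylorBoundary_compLeft, hKF, sub_self])
  refine ⟨β.compLeft _ M, ?_⟩
  rw [taylorBoundary_compLeft, hM, map_sub, (exact_compLeft hex _).apply_apply_eq_zero, sub_zero]

lemma exists_connecting (hα : Function.Injective α) (hβ : Function.Surjective β)
    (hex : Function.Exact α β) {f : Finset ι → N₃} (hf : f ∈ taylorChains ι R N₃ (p + 1))
    (hdf : taylorBoundary c N₃ f = 0) :
    ∃ F ∈ taylorChains ι R N₂ (p + 1), β.compLeft _ F = f ∧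
      ∃ G ∈ taylorChains ι R N₁ p, α.compLeft _ G = taylorBoundary c N₂ F := by
  obtain ⟨F, hF, rfl⟩ := exists_mem_chains_compLeft_eq hβ hf
  obtain ⟨G, hG⟩ := (exact_compLeft hex _ (taylorBoundary c N₂ F)).1 (by
    rw [← taylorBoundary_compLeft, hdf])
  refine ⟨F, hF, rfl, G, fun σ hσ => hα ?_, hG⟩
  rw [map_zero, ← taylorBoundary_mem hF σ hσ, ← hG, LinearMap.compLeft_apply, Function.comp_apply]

lemma TaylorExactAt.of_exact_right (hc : IsTaylorCoeff c) (hα : Function.Injective α)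
    (hβ : Function.Surjective β) (hex : Function.Exact α β) (h₂ : TaylorExactAt c N₂ (p + 1))
    (h₁ : TaylorExactAt c N₁ p) : TaylorExactAt c N₃ (p + 1) := by
  intro f hf hdf
  obtain ⟨F, hF, rfl, G, hG, hGF⟩ := exists_connecting hα hβ hex hf hdf
  have hdG : taylorBoundary c N₁ G = 0 := hα.comp_left <| show α.compLeft _ _ = α.compLeft _ _ by
    rw [← taylorBoundary_compLeft, hGF, taylorBoundary_taylorBoundary hc, map_zero]
  obtain ⟨K, hK, rfl⟩ := exists_mem_chains_of_mem_range hG (h₁ G hG hdG)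
  exact compLeft_mem_range_of_connecting_eq hex h₂ hK hF hGF

lemma TaylorExactAt.of_exact_left (hc : IsTaylorCoeff c) (hα : Function.Injective α)
    (hβ : Function.Surjective β) (hex : Function.Exact α β) (h₂ : TaylorExactAt c N₂ p)
    (h₃ : TaylorExactAt c N₃ (p + 1)) : TaylorExactAt c N₁ p := by
  intro f hf hdf
  have hαf := compLeft_mem_taylorChains (α := α) hf
  obtain ⟨F, hF, hdF⟩ := exists_mem_chains_of_mem_range hαf <| h₂ _ hαf <| by
    rw [taylorBoundary_compLeft, hdf, map_zero]
  refine mem_range_of_connecting_mem_range hc hα hβ hex hdF.symm <|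
    h₃ _ (compLeft_mem_taylorChains hF) ?_
  rw [taylorBoundary_compLeft, hdF, (exact_compLeft hex _).apply_apply_eq_zero]

lemma mem_range_taylorBoundary_iff_of_mem_chains_zero {G : Finset ι → N₁}
    (hG : G ∈ taylorChains ι R N₁ 0) :
    G ∈ LinearMap.range (taylorBoundary c N₁) ↔
      G ∅ ∈ Ideal.span (Set.range fun i => c {i} i) • (⊤ : Submodule R N₁) := by
  have hG0 : Pi.single ∅ (G ∅) = G := by
    ext σ
    rcases eq_or_ne σ ∅ with rfl | hσ
    · rw [Pi.single_eq_same]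
    · rw [Pi.single_eq_of_ne hσ, hG σ (by simpa using hσ)]
  constructor
  · rintro ⟨F, rfl⟩
    refine sum_mem fun i _ => zsmul_mem (Submodule.smul_mem_smul ?_ Submodule.mem_top) _
    exact Ideal.subset_span ⟨i, by simp⟩
  · intro h
    have hle : Ideal.span (Set.range fun i => c {i} i) • (⊤ : Submodule R N₁) ≤
        (LinearMap.range (taylorBoundary c N₁)).comap (LinearMap.single R _ ∅) := by
      rw [Submodule.span_smul_eq, Submodule.set_smul_le_iff]
      rintro _ y ⟨i, rfl⟩ -
      exact ⟨Pi.single {i} y, by simp [taylorBoundary_single, insertSign, Pi.single_smul]⟩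
    exact hG0 ▸ hle h

/-- The connecting homomorphism identifies `H₁(N₃)` with the kernel of `N₁ / I N₁ → N₂ / I N₂`. -/
lemma taylorExactAt_one_iff (hc : IsTaylorCoeff c) (hα : Function.Injective α)
    (hβ : Function.Surjective β) (hex : Function.Exact α β) (h₂ : TaylorExactAt c N₂ 1) :
    TaylorExactAt c N₃ 1 ↔
      ∀ x, α x ∈ Ideal.span (Set.range fun i => c {i} i) • (⊤ : Submodule R N₂) →
        x ∈ Ideal.span (Set.range fun i => c {i} i) • (⊤ : Submodule R N₁) := by
  constructor
  · intro h₃ x hx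
    let G : Finset ι → N₁ := Pi.single ∅ x
    have hG : G ∈ taylorChains ι R N₁ 0 := fun σ hσ =>
      Pi.single_eq_of_ne (by rintro rfl; exact hσ card_empty) _
    have hG0 : G ∅ = x := Pi.single_eq_same _ _
    have hαG := compLeft_mem_taylorChains (α := α) hG
    obtain ⟨F, hF, hdF⟩ := exists_mem_chains_of_mem_range hαG <|
      (mem_range_taylorBoundary_iff_of_mem_chains_zero (c := c) hαG).2 <| by
        simpa only [LinearMap.compLeft_apply, Function.comp_apply, hG0] using hx
    rw [← hG0]
    refine (mem_range_taylorBoundary_iff_of_mem_chains_zero hG).1 <|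
      mem_range_of_connecting_mem_range hc hα hβ hex hdF.symm <|
        h₃ _ (compLeft_mem_taylorChains hF) ?_
    rw [taylorBoundary_compLeft, hdF, (exact_compLeft hex _).apply_apply_eq_zero]
  · intro h f hf hdf
    obtain ⟨F, hF, rfl, G, hG, hGF⟩ := exists_connecting hα hβ hex hf hdf
    obtain ⟨K, hK, rfl⟩ := exists_mem_chains_of_mem_range hG <|
      (mem_range_taylorBoundary_iff_of_mem_chains_zero hG).2 <| h _ <| by
        have hαG := compLeft_mem_taylorChains (α := α) hG
        exact (mem_range_taylorBoundary_iff_of_mem_chains_zero hαG).1 ⟨F, hGF.symm⟩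
    exact compLeft_mem_range_of_connecting_eq hex h₂ hK hF hGF

end ExactSequences

section LcmCoefficients

variable {ι κ R R' : Type*} [CommRing R] [CommRing R']

section Ratio

variable [Fintype κ] (a : κ → ι → ℕ) (z : κ → R)

/-- The quotient `L_ρ / L_σ` for `σ ⊆ ρ`, where `L_σ = ∏ t, z t ^ max_{j ∈ σ} a t j` is the least
common multiple of the monomials `∏ t, z t ^ a t j`, `j ∈ σ`, in independent variables `z t`. In
particular `lcmRatio a z σ ∅` is `L_σ` itself. -/
def lcmRatio (ρ σ : Finset ι) : R := ∏ t, z t ^ (ρ.sup (a t) - σ.sup (a t))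

variable {a z}

lemma lcmRatio_mul_lcmRatio {ρ σ τ : Finset ι} (hτσ : τ ⊆ σ) (hσρ : σ ⊆ ρ) :
    lcmRatio a z ρ σ * lcmRatio a z σ τ = lcmRatio a z ρ τ := by
  rw [lcmRatio, lcmRatio, ← prod_mul_distrib]
  refine prod_congr rfl fun t _ => ?_
  rw [← pow_add, tsub_add_tsub_cancel (sup_mono hσρ) (sup_mono hτσ)]

lemma lcmRatio_mul_left (u v : κ → R) (ρ σ : Finset ι) :
    lcmRatio a (u * v) ρ σ = lcmRatio a u ρ σ * lcmRatio a v ρ σ := by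
  simp only [lcmRatio, Pi.mul_apply, mul_pow, prod_mul_distrib]

lemma lcmRatio_empty_dvd_iff [DecompositionMonoid R] (hz : Pairwise (Function.onFun IsRelPrime z))
    {σ : Finset ι} {q : R} :
    lcmRatio a z σ ∅ ∣ q ↔ ∀ j ∈ σ, ∏ t, z t ^ a t j ∣ q := by
  simp only [lcmRatio, sup_empty, bot_eq_zero, Nat.sub_zero]
  constructor
  · exact fun h j hj =>
      (prod_dvd_prod_of_dvd _ _ fun t _ => pow_dvd_pow _ (le_sup (f := a t) hj)).trans h
  · refine fun h => prod_dvd_of_isRelPrime (fun s _ t _ hst => (hz hst).pow) fun t _ => ?_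
    rcases σ.eq_empty_or_nonempty with rfl | hσ
    · simp
    · obtain ⟨j, hj, hmax⟩ := exists_mem_eq_sup σ hσ (a t)
      rw [hmax]
      exact (dvd_prod_of_mem (fun t => z t ^ a t j) (mem_univ t)).trans (h j hj)

lemma map_lcmRatio (φ : R →+* R') (ρ σ : Finset ι) :
    φ (lcmRatio a z ρ σ) = lcmRatio a (φ ∘ z) ρ σ := by
  simp only [lcmRatio, map_prod, map_pow, Function.comp_apply]

variable (a z) in
/-- The coefficients `L_σ / L_{σ \ {i}}` of the Taylor complex of the monomials
`∏ t, z t ^ a t j`. -/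
def lcmQuot [DecidableEq ι] (σ : Finset ι) (i : ι) : R := lcmRatio a z σ (σ.erase i)

variable [DecidableEq ι]

lemma lcmQuot_insert {τ : Finset ι} {i : ι} (hi : i ∉ τ) :
    lcmQuot a z (insert i τ) i = lcmRatio a z (insert i τ) τ := by
  rw [lcmQuot, erase_insert hi]

lemma lcmQuot_insert_mul {σ τ : Finset ι} {i : ι} (hi : i ∉ τ) (hσ : σ ⊆ τ) :
    lcmQuot a z (insert i τ) i * lcmRatio a z τ σ = lcmRatio a z (insert i τ) σ := by
  rw [lcmQuot_insert hi, lcmRatio_mul_lcmRatio hσ (subset_insert i τ)]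

lemma lcmQuot_singleton (i : ι) : lcmQuot a z {i} i = ∏ t, z t ^ a t i := by
  simp [lcmQuot, lcmRatio]

lemma map_lcmQuot (φ : R →+* R') (σ : Finset ι) (i : ι) :
    φ (lcmQuot a z σ i) = lcmQuot a (φ ∘ z) σ i := map_lcmRatio φ _ _

end Ratio

variable [LinearOrder ι]

lemma isTaylorCoeff_lcmQuot [Fintype κ] (a : κ → ι → ℕ) (z : κ → R) :
    IsTaylorCoeff (lcmQuot a z) := by
  intro τ i j hi hj hij
  have h : ∀ {i j : ι}, i ∉ τ → j ∉ τ → i ≠ j →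
      lcmQuot a z (insert i τ) i * lcmQuot a z (insert j (insert i τ)) j =
        lcmRatio a z (insert j (insert i τ)) τ := fun {i j} hi hj hij => by
    rw [lcmQuot_insert hi, mul_comm, lcmQuot_insert_mul (by simp [hij.symm, hj])
      (subset_insert _ _)]
  rw [h hi hj hij, h hj hi hij.symm, insert_comm]

lemma isTaylorCoeff_of_insert_mul [IsDomain R] {L : Finset ι → R}
    {c : Finset ι → ι → R} (hL : ∀ σ, L σ ≠ 0)
    (hc : ∀ τ, ∀ i ∉ τ, c (insert i τ) i * L τ = L (insert i τ)) : IsTaylorCoeff c := by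
  have h : ∀ {τ i j}, i ∉ τ → j ∉ τ → i ≠ j →
      c (insert i τ) i * c (insert j (insert i τ)) j * L τ = L (insert j (insert i τ)) :=
    fun {τ i j} hi hj hij => by
      rw [← hc (insert i τ) j (by simp [hj, hij.symm]), ← hc τ i hi]
      ring
  intro τ i j hi hj hij
  refine mul_right_cancel₀ (hL τ) ?_
  rw [h hi hj hij, h hj hi hij.symm, insert_comm]

variable [Fintype ι] {N : Type*} [AddCommGroup N] [Module R N] {p : ℕ}

/-- Multiplication by `L_univ(v)` factors through the Taylor complex of the forms `u`. -/
lemma lcmRatio_smul_mem_range [Fintype κ] {a : κ → ι → ℕ} {u v : κ → R}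
    (hu : TaylorExactAt (lcmQuot a u) N p) {f : Finset ι → N} (hf : f ∈ taylorChains ι R N p)
    (hdf : taylorBoundary (lcmQuot a (u * v)) N f = 0) :
    lcmRatio a v univ ∅ • f ∈ LinearMap.range (taylorBoundary (lcmQuot a (u * v)) N) := by
  have hmul : ∀ τ i, lcmQuot a (u * v) (insert i τ) i =
      lcmQuot a u (insert i τ) i * lcmQuot a v (insert i τ) i := fun τ i =>
    lcmRatio_mul_left u v _ _
  have hd := taylorBoundary_rescale (c := lcmQuot a (u * v)) (c' := lcmQuot a u)
    (fun σ => lcmRatio a v σ ∅) (fun τ i hi => by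
      rw [hmul, ← lcmQuot_insert_mul hi (empty_subset τ)]; ring) f
  obtain ⟨g, hg⟩ := hu (fun σ => lcmRatio a v σ ∅ • f σ) (fun σ hσ => by simp [hf σ hσ])
    (by rw [hd, hdf]; ext; simp)
  refine ⟨fun σ => lcmRatio a v univ σ • g σ, (taylorBoundary_rescale (c := lcmQuot a u)
    (c' := lcmQuot a (u * v)) (lcmRatio a v univ) (fun τ i hi => ?_) g).trans ?_⟩
  · rw [hmul, lcmQuot_insert (z := v) hi,
      ← lcmRatio_mul_lcmRatio (subset_insert i τ) (subset_univ (insert i τ))]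
    ring
  · ext σ
    rw [hg, smul_smul, lcmRatio_mul_lcmRatio (empty_subset σ) (subset_univ σ), Pi.smul_apply]

lemma taylorExactAt_iff_of_associated [IsDomain R] {L L' : Finset ι → R} {c c' : Finset ι → ι → R}
    (hL : ∀ σ, L σ ≠ 0) (hLL' : ∀ σ, Associated (L' σ) (L σ))
    (hc : ∀ τ, ∀ i ∉ τ, c (insert i τ) i * L τ = L (insert i τ))
    (hc' : ∀ τ, ∀ i ∉ τ, c' (insert i τ) i * L' τ = L' (insert i τ)) :
    TaylorExactAt c N p ↔ TaylorExactAt c' N p := by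
  choose u hu using hLL'
  have h : ∀ τ, ∀ i ∉ τ, c (insert i τ) i * u τ = c' (insert i τ) i * u (insert i τ) := by
    intro τ i hi
    have hL' : L' τ ≠ 0 := fun h => hL τ (by rw [← hu, h, zero_mul])
    refine mul_left_cancel₀ hL' ?_
    rw [mul_left_comm, hu, hc τ i hi, ← hu, ← hc' τ i hi]
    ring
  refine taylorExactAt_congr (fun σ => DistribMulAction.toAddEquiv N (u σ)) fun τ i hi x => ?_
  simp only [DistribMulAction.toAddEquiv_apply, Units.smul_def, smul_smul, ← h τ i hi, mul_comm]

end LcmCoefficients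

section Monomials

variable {ι κ A : Type*} [CommRing A]

open MvPolynomial

lemma lcmRatio_X_empty [Fintype κ] (a : κ → ι → ℕ) (σ : Finset ι) :
    lcmRatio a (X : κ → MvPolynomial κ A) σ ∅ =
      monomial (Finsupp.equivFunOnFinite.symm fun t => σ.sup (a t)) 1 := by
  rw [monomial_eq, C_1, one_mul, Finsupp.prod_fintype _ _ fun _ => pow_zero _]
  rfl

lemma lcmRatio_X_empty_dvd_iff [Fintype κ] (a : κ → ι → ℕ) (σ : Finset ι) (q : MvPolynomial κ A) :
    lcmRatio a X σ ∅ ∣ q ↔ ∀ β ∈ q.support, ∀ i ∈ σ, ∀ t, a t i ≤ β t := by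
  have hle : ∀ β : κ →₀ ℕ, Finsupp.equivFunOnFinite.symm (fun t => σ.sup (a t)) ≤ β ↔
      ∀ i ∈ σ, ∀ t, a t i ≤ β t := fun β => by
    simp only [Finsupp.le_def, Finsupp.equivFunOnFinite_symm_apply_apply, Finset.sup_le_iff]
    exact ⟨fun h i hi t => h t i hi, fun h t i hi => h i hi t⟩
  rw [lcmRatio_X_empty, monomial_one_dvd_iff_modMonomial_eq_zero, MvPolynomial.ext_iff]
  refine forall_congr' fun β => ?_
  rw [← hle, mem_support_iff, coeff_zero]
  by_cases h : Finsupp.equivFunOnFinite.symm (fun t => σ.sup (a t)) ≤ β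
  · simp [coeff_modMonomial_of_le _ h, h]
  · rw [coeff_modMonomial_of_not_le _ h]
    tauto

variable {A' N N' : Type*} [CommRing A'] [AddCommGroup N] [Module A N] [AddCommGroup N']
  [Module A' N'] [LinearOrder ι] [Fintype ι]

lemma taylorBoundary_one_map (e : N →+ N') (f : Finset ι → N) :
    taylorBoundary (1 : Finset ι → ι → A') N' (fun σ => e (f σ)) =
      fun σ => e (taylorBoundary (1 : Finset ι → ι → A) N f σ) :=
  taylorBoundary_map (fun _ => e) (fun τ i _ x => by simp) f

/-- The cone with apex `j` over a chain of the simplex on `ι`. -/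
def simplexCone (j : ι) (F : Finset ι → N) (σ : Finset ι) : N :=
  if j ∈ σ then insertSign (σ.erase j) j • F (σ.erase j) else 0

lemma taylorBoundary_simplexCone_add (j : ι) (F : Finset ι → N) :
    taylorBoundary (1 : Finset ι → ι → A) N (simplexCone j F) +
      simplexCone j (taylorBoundary (1 : Finset ι → ι → A) N F) = F := by
  ext τ
  simp only [Pi.add_apply, simplexCone, taylorBoundary_apply, Pi.one_apply, one_smul]
  by_cases hj : j ∈ τ
  · obtain ⟨ρ, hρ, rfl⟩ : ∃ ρ, j ∉ ρ ∧ insert j ρ = τ :=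
      ⟨τ.erase j, notMem_erase _ _, insert_erase hj⟩
    have hcompl : ρᶜ = insert j (insert j ρ)ᶜ := by
      ext x
      by_cases hx : x = j <;> simp [hx, hρ]
    have hterm : ∀ i ∈ (insert j ρ)ᶜ, insertSign (insert j ρ) i •
        (if j ∈ insert i (insert j ρ) then insertSign ((insert i (insert j ρ)).erase j) j •
          F ((insert i (insert j ρ)).erase j) else 0) =
        -(insertSign ρ j • insertSign ρ i • F (insert i ρ)) := fun i hi => by
      obtain ⟨hij, hi⟩ : i ≠ j ∧ i ∉ ρ := by simpa using hi
      rw [if_pos (by simp), insert_comm, erase_insert (by simp [hij.symm, hρ]), smul_smul,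
        smul_smul, insertSign_insert_mul_insertSign_insert hi hρ hij, neg_smul]
    rw [sum_congr rfl hterm, if_pos hj, erase_insert hρ, hcompl, sum_insert (by simp), smul_add,
      smul_smul, insertSign_mul_self, one_smul, smul_sum, sum_neg_distrib, add_comm, add_assoc,
      add_neg_cancel, add_zero]
  · rw [if_neg hj, add_zero, sum_eq_single_of_mem j (by simpa using hj)]
    · rw [if_pos (mem_insert_self j τ), erase_insert hj, smul_smul, insertSign_mul_self, one_smul]
    · intro i _ hij
      rw [if_neg (by simp [hij.symm, hj]), smul_zero]

lemma exists_taylorBoundary_one_eq {F : Finset ι → N}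
    (hF : taylorBoundary (1 : Finset ι → ι → A) N F = 0) (hF0 : F ∅ = 0) {D : ι → Prop}
    (hD : ∀ σ, F σ ≠ 0 → ∀ i ∈ σ, D i) :
    ∃ G, taylorBoundary (1 : Finset ι → ι → A) N G = F ∧ ∀ σ, G σ ≠ 0 → ∀ i ∈ σ, D i := by
  by_cases h : ∃ j, D j
  · obtain ⟨j, hj⟩ := h
    have hcone := taylorBoundary_simplexCone_add (A := A) j F
    refine ⟨simplexCone j F, ?_, fun σ hσ i hi => ?_⟩
    · rwa [hF, show simplexCone j (0 : Finset ι → N) = 0 by ext; simp [simplexCone], add_zero]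
        at hcone
    · have hσ' : F (σ.erase j) ≠ 0 := fun h0 => hσ (by simp [simplexCone, h0])
      rcases eq_or_ne i j with rfl | hij
      · exact hj
      · exact hD _ hσ' i (mem_erase.2 ⟨hij, hi⟩)
  · have hF_zero : F = 0 := funext fun σ => by
      rcases σ.eq_empty_or_nonempty with rfl | ⟨i, hi⟩
      · exact hF0
      · by_contra hσ
        exact h ⟨i, hD σ hσ i hi⟩
    exact ⟨0, by rw [hF_zero, map_zero], fun σ hσ => absurd rfl hσ⟩

lemma exists_taylorBoundary_one_eq_of_support {F : Finset ι → MvPolynomial κ A}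
    (hF : taylorBoundary (1 : Finset ι → ι → MvPolynomial κ A) _ F = 0) (hF0 : F ∅ = 0)
    {D : (κ →₀ ℕ) → ι → Prop} (hD : ∀ σ, ∀ β ∈ (F σ).support, ∀ i ∈ σ, D β i) :
    ∃ G, taylorBoundary (1 : Finset ι → ι → MvPolynomial κ A) _ G = F ∧
      ∀ σ, ∀ β ∈ (G σ).support, ∀ i ∈ σ, D β i := by
  classical
  have hcoeff : ∀ β, ∃ G : Finset ι → A,
      taylorBoundary (1 : Finset ι → ι → A) A G = (fun σ => coeff β (F σ)) ∧
        ∀ σ, G σ ≠ 0 → ∀ i ∈ σ, D β i := fun β => by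
    refine exists_taylorBoundary_one_eq ?_ (by rw [hF0, coeff_zero]) fun σ hσ =>
      hD σ β (mem_support_iff.2 hσ)
    refine (taylorBoundary_one_map (A := MvPolynomial κ A) (lcoeff A β).toAddMonoidHom F).trans ?_
    rw [hF]
    exact funext fun _ => map_zero (lcoeff A β)
  choose G hG hGD using hcoeff
  let B : Finset (κ →₀ ℕ) := univ.biUnion fun σ => (F σ).support
  have hFB : ∀ σ, ∑ β ∈ B, monomial β (coeff β (F σ)) = F σ := fun σ => by
    conv_rhs => rw [← support_sum_monomial_coeff (F σ)]
    refine (sum_subset (subset_biUnion_of_mem (fun σ => (F σ).support) (mem_univ σ))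
      fun β _ hβ => ?_).symm
    rw [notMem_support_iff.1 hβ, map_zero]
  refine ⟨∑ β ∈ B, fun σ => monomial β (G β σ), ?_, fun σ β hβ i hi => hGD β σ (fun h => ?_) i hi⟩
  · rw [map_sum]
    ext1 σ
    rw [Finset.sum_apply, ← hFB σ]
    refine sum_congr rfl fun β _ => ?_
    have h := taylorBoundary_one_map (A := A) (A' := MvPolynomial κ A)
      (monomial β : A →ₗ[A] MvPolynomial κ A).toAddMonoidHom (G β)
    rw [hG β] at h
    exact congrFun h σ
  · rw [mem_support_iff, Finset.sum_apply, coeff_sum] at hβ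
    refine hβ (sum_eq_zero fun γ _ => ?_)
    rw [coeff_monomial]
    split_ifs with hγ
    · rw [hγ, h]
    · rfl

/-- Taylor's theorem; up to the factors `L_σ` the complex splits by multidegree into simplices. -/
lemma taylorExactAt_lcmQuot_X [Fintype κ] (a : κ → ι → ℕ) {p : ℕ} (hp : p ≠ 0) :
    TaylorExactAt (lcmQuot a (X : κ → MvPolynomial κ A)) (MvPolynomial κ A) p := by
  intro f hf hdf
  let L : Finset ι → MvPolynomial κ A := fun σ => lcmRatio a X σ ∅
  have hd (g : Finset ι → MvPolynomial κ A) : taylorBoundary (1 : Finset ι → ι → MvPolynomial κ A)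
      (MvPolynomial κ A) (fun σ => L σ * g σ) = fun σ => L σ * taylorBoundary (lcmQuot a X) _ g σ :=
    taylorBoundary_rescale L (fun τ i hi => by
      rw [mul_comm, lcmQuot_insert_mul hi (empty_subset τ), Pi.one_apply, Pi.one_apply, one_mul]) g
  obtain ⟨G, hG, hGD⟩ := exists_taylorBoundary_one_eq_of_support (F := fun σ => L σ * f σ)
    (by rw [hd, hdf]; exact funext fun σ => mul_zero _)
    (by rw [hf ∅ (by simpa using hp.symm), mul_zero])
    fun σ => (lcmRatio_X_empty_dvd_iff a σ _).1 (dvd_mul_right _ _)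
  choose g hg using fun σ => (lcmRatio_X_empty_dvd_iff a σ (G σ)).2 (hGD σ)
  obtain rfl : G = fun σ => L σ * g σ := funext hg
  refine ⟨g, funext fun σ => ?_⟩
  have hreg : IsRegular (L σ) := IsRegular.prod fun t _ => isRegular_X_pow _
  exact hreg.left (congrFun ((hd g).symm.trans hG) σ)

end Monomials

section LinearForms

open MvPolynomial

variable {k σ κ : Type*} [Field k] {Z : κ → MvPolynomial σ k}

lemma irreducible_of_isHomogeneous_one {z : MvPolynomial σ k} (hz : z.IsHomogeneous 1)
    (hz0 : z ≠ 0) : Irreducible z := by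
  refine irreducible_of_totalDegree_eq_one (hz.totalDegree hz0) fun x hx => ?_
  refine isUnit_iff_ne_zero.2 ?_
  rintro rfl
  exact hz0 (MvPolynomial.ext _ _ fun d => by simpa using hx d)

lemma isRelPrime_of_isHomogeneous_one {z w : MvPolynomial σ k} (hz : z.IsHomogeneous 1)
    (hw : w.IsHomogeneous 1) (hz0 : z ≠ 0) (hw0 : w ≠ 0)
    (h : ∀ x : k, w ≠ x • z) : IsRelPrime z w := by
  have hzirr := irreducible_of_isHomogeneous_one hz hz0
  rw [hzirr.isRelPrime_iff_not_dvd,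
    hzirr.dvd_irreducible_iff_associated (irreducible_of_isHomogeneous_one hw hw0)]
  rintro ⟨u, rfl⟩
  obtain ⟨x, -, hx⟩ := isUnit_iff_eq_C_of_isReduced.1 u.isUnit
  exact h x (by rw [hx, smul_eq_C_mul, mul_comm])

lemma exists_linearIndependent_linearCombination_X_eq (hlin : ∀ i, (Z i).IsHomogeneous 1)
    (hZ : LinearIndependent k Z) :
    ∃ v : κ → σ →₀ k, LinearIndependent k v ∧ ∀ i, Finsupp.linearCombination k X (v i) = Z i := by
  have hex : ∀ i, Z i ∈ LinearMap.range (Finsupp.linearCombination k (X : σ → MvPolynomial σ k)) :=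
    fun i => by
      rw [Finsupp.range_linearCombination, ← homogeneousSubmodule_one_eq_span_X]
      exact hlin i
  choose v hv using hex
  refine ⟨v, .of_comp (Finsupp.linearCombination k (X : σ → MvPolynomial σ k)) ?_, hv⟩
  rwa [← funext hv] at hZ

lemma exists_algEquiv_X_inl_eq (hlin : ∀ i, (Z i).IsHomogeneous 1) (hZ : LinearIndependent k Z) :
    ∃ (s : Set (σ →₀ k)) (e : MvPolynomial (κ ⊕ s) k ≃ₐ[k] MvPolynomial σ k),
      ∀ i, e (X (Sum.inl i)) = Z i := by
  obtain ⟨v, hv, hvZ⟩ := exists_linearIndependent_linearCombination_X_eq hlin hZ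
  let e₀ := SymmetricAlgebra.equivMvPolynomial (Finsupp.basisSingleOne (R := k) (ι := σ))
  have he₀ : e₀.toLinearMap ∘ₗ SymmetricAlgebra.ι k (σ →₀ k) = Finsupp.linearCombination k X :=
    (Finsupp.basisSingleOne (R := k)).ext fun l => by
      rw [LinearMap.comp_apply, AlgEquiv.toLinearMap_apply,
        SymmetricAlgebra.equivMvPolynomial_ι_apply]
      simp
  refine ⟨_, (SymmetricAlgebra.equivMvPolynomial (Module.Basis.sumExtend hv)).symm.trans e₀,
    fun i => ?_⟩
  rw [AlgEquiv.trans_apply, SymmetricAlgebra.equivMvPolynomial_symm_X,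
    ← hvZ, ← he₀, LinearMap.comp_apply]
  refine congrArg (fun w => e₀ (SymmetricAlgebra.ι k _ w)) ?_
  rw [Module.Basis.sumExtend, Module.Basis.reindex_apply, Module.Basis.extend_apply_self]
  rfl

lemma idealOfVars_le_of_linearIndependent [Fintype σ] [Fintype κ]
    (hcard : Fintype.card κ = Fintype.card σ) (hlin : ∀ i, (Z i).IsHomogeneous 1)
    (hZ : LinearIndependent k Z) {P : Ideal (MvPolynomial σ k)} (hP : ∀ i, Z i ∈ P) :
    idealOfVars σ k ≤ P := by
  obtain ⟨v, hv, hvZ⟩ := exists_linearIndependent_linearCombination_X_eq hlin hZ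
  have hspan : Submodule.span k (Set.range v) = ⊤ :=
    hv.span_eq_top_of_card_eq_finrank' (by rw [hcard, Module.finrank_finsupp_self])
  have hle : Submodule.span k (Set.range v) ≤
      (P.restrictScalars k).comap (Finsupp.linearCombination k X) :=
    Submodule.span_le.2 <| Set.range_subset_iff.2 fun i => by
      simpa [hvZ] using hP i
  refine Ideal.span_le.2 <| Set.range_subset_iff.2 fun l => ?_
  have hl : Finsupp.single l (1 : k) ∈ (P.restrictScalars k).comap _ :=
    hle (hspan ▸ Submodule.mem_top)
  simpa using hl

variable {ι : Type*} [LinearOrder ι] [Fintype ι] {p : ℕ} [Fintype κ]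

lemma taylorExactAt_lcmQuot_of_linearIndependent (a : κ → ι → ℕ)
    (hlin : ∀ i, (Z i).IsHomogeneous 1) (hZ : LinearIndependent k Z) (hp : p ≠ 0) :
    TaylorExactAt (lcmQuot a Z) (MvPolynomial σ k) p := by
  obtain ⟨s, e, he⟩ := exists_algEquiv_X_inl_eq hlin hZ
  let φ := ((sumAlgEquiv k κ s).symm.trans e).toRingEquiv
  have hφ : φ ∘ X = Z := funext fun i => by
    rw [← he, Function.comp_apply, ← sumAlgEquiv_X_inl k κ s i]
    exact congrArg e (AlgEquiv.symm_apply_apply _ _)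
  refine (taylorExactAt_congr (fun _ => φ.toAddEquiv) fun τ i _ x => ?_).1
    (taylorExactAt_lcmQuot_X a hp)
  rw [← hφ]
  exact (map_mul φ _ _).trans (congrArg (· * φ x) (map_lcmQuot φ.toRingHom _ _))

lemma taylorExactAt_lcmQuot_piecewise [DecidableEq κ] (a : κ → ι → ℕ) (W : Finset κ)
    (hlin : ∀ i, (Z i).IsHomogeneous 1) (hZ : LinearIndependent k fun i : W => Z i) (hp : p ≠ 0) :
    TaylorExactAt (lcmQuot a (W.piecewise Z 1)) (MvPolynomial σ k) p := by
  convert taylorExactAt_lcmQuot_of_linearIndependent (fun i : W => a i) (fun i => hlin i) hZ hp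
    using 1
  ext1 τ
  ext1 i
  simp only [lcmQuot, lcmRatio]
  rw [prod_coe_sort W fun t => Z t ^ (τ.sup (a t) - (τ.erase i).sup (a t)),
    ← prod_subset (subset_univ W) fun t _ ht => by simp [ht]]
  exact prod_congr rfl fun t ht => by rw [piecewise_eq_of_mem _ _ _ ht]

end LinearForms

section Depth

open RingTheory.Sequence MvPolynomial

open scoped Pointwise

variable {ι R N N' : Type*} [CommRing R] [AddCommGroup N] [Module R N] [AddCommGroup N']
  [Module R N'] [LinearOrder ι] [Fintype ι] {c : Finset ι → ι → R} {p : ℕ} {I : Ideal R}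

/-- The socle with respect to the ideal `I` of the degree `p` homology of the Taylor complex with
coefficients in `N` vanishes: every class annihilated by `I` is zero. -/
def SocleExactAt (I : Ideal R) (c : Finset ι → ι → R) (N : Type*) [AddCommGroup N] [Module R N]
    (p : ℕ) : Prop :=
  ∀ f ∈ taylorChains ι R N p, taylorBoundary c N f = 0 →
    (∀ x ∈ I, x • f ∈ LinearMap.range (taylorBoundary c N)) →
      f ∈ LinearMap.range (taylorBoundary c N)

lemma SocleExactAt.mem_range_of_le_radical (h : SocleExactAt I c N p) (hI : I.FG)
    {f : Finset ι → N} (hf : f ∈ taylorChains ι R N p) (hdf : taylorBoundary c N f = 0)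
    (hrad : I ≤ ((LinearMap.range (taylorBoundary c N)).colon {f}).radical) :
    f ∈ LinearMap.range (taylorBoundary c N) := by
  obtain ⟨e, he⟩ := Ideal.exists_pow_le_of_le_radical_of_fg hrad hI
  induction e with
  | zero => simpa using Submodule.mem_colon_singleton.1 (he (by simp : (1 : R) ∈ I ^ 0))
  | succ e ih =>
    refine ih fun x hx => Submodule.mem_colon_singleton.2 ?_
    refine h (x • f) (Submodule.smul_mem _ x hf) (by rw [map_smul, hdf, smul_zero]) fun y hy => ?_
    rw [smul_smul, ← Submodule.mem_colon_singleton, mul_comm]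
    exact he (pow_succ I e ▸ Ideal.mul_mem_mul hx hy)

lemma taylorExactAt_iff_of_linearEquiv (e : N ≃ₗ[R] N') :
    TaylorExactAt c N p ↔ TaylorExactAt c N' p :=
  taylorExactAt_congr (fun _ => e.toAddEquiv) fun _ _ _ x => e.map_smul _ x

lemma TaylorExactAt.quotSMulTop (hc : IsTaylorCoeff c) {x : R} (hx : IsSMulRegular N x)
    (h : TaylorExactAt c N p) (h' : TaylorExactAt c N (p + 1)) :
    TaylorExactAt c (QuotSMulTop x N) (p + 1) :=
  h'.of_exact_right (α := LinearMap.lsmul R N x) hc hx (Submodule.mkQ_surjective _)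
    (LinearMap.exact_lsmul_mkQ_smul_top N x) h

lemma SocleExactAt.of_quotSMulTop (hc : IsTaylorCoeff c) {x : R} (hxI : x ∈ I)
    (hx : IsSMulRegular N x) (h : TaylorExactAt c N (p + 1))
    (hsoc : SocleExactAt I c (QuotSMulTop x N) (p + 1)) : SocleExactAt I c N p := by
  intro f hf _ hIf
  have hex := LinearMap.exact_lsmul_mkQ_smul_top N x
  obtain ⟨F, hF, hdF⟩ := exists_mem_chains_of_mem_range (Submodule.smul_mem _ x hf) (hIf x hxI)
  refine mem_range_of_connecting_mem_range (α := LinearMap.lsmul R N x) hc hx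
    (Submodule.mkQ_surjective _) hex hdF.symm <|
      hsoc _ (compLeft_mem_taylorChains hF) ?_ fun y hy => ?_
  · rw [taylorBoundary_compLeft, hdF]
    exact (exact_compLeft hex _).apply_apply_eq_zero f
  · obtain ⟨K, hK, hdK⟩ := exists_mem_chains_of_mem_range (Submodule.smul_mem _ y hf) (hIf y hy)
    rw [← map_smul]
    refine compLeft_mem_range_of_connecting_eq hex h hK (Submodule.smul_mem _ y hF) ?_
    rw [hdK, map_smul, map_smul, hdF]
    rfl

lemma TaylorExactAt.quot_ofList (hc : IsTaylorCoeff c) {rs : List R} {q : ℕ}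
    (hrs : IsWeaklyRegular N rs) (h : ∀ i > q, TaylorExactAt c N i) :
    ∀ i > q + rs.length, TaylorExactAt c (N ⧸ (Ideal.ofList rs • ⊤ : Submodule R N)) i := by
  induction rs generalizing N q with
  | nil =>
    intro i hi
    exact (taylorExactAt_iff_of_linearEquiv (Submodule.quotEquivOfEqBot _ (by simp))).2 (h i hi)
  | cons x rs ih =>
    obtain ⟨hx, hrs⟩ := (isWeaklyRegular_cons_iff N x rs).1 hrs
    intro i hi
    rw [taylorExactAt_iff_of_linearEquiv
      (Submodule.quotOfListConsSMulTopEquivQuotSMulTopInner N x rs)]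
    refine ih (q := q + 1) hrs (fun j hj => ?_) i (by rw [List.length_cons] at hi; omega)
    obtain ⟨j, rfl⟩ := Nat.exists_eq_add_of_lt hj
    exact (h _ (by omega)).quotSMulTop hc hx (h _ (by omega))

lemma SocleExactAt.of_quot_ofList (hc : IsTaylorCoeff c) {rs : List R} {q : ℕ}
    (hrs : IsWeaklyRegular N rs) (hrsI : ∀ x ∈ rs, x ∈ I) (h : ∀ i > q, TaylorExactAt c N i)
    (hq : TaylorExactAt c (N ⧸ (Ideal.ofList rs • ⊤ : Submodule R N)) (q + rs.length)) :
    SocleExactAt I c N q := by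
  induction rs generalizing N q with
  | nil =>
    rw [taylorExactAt_iff_of_linearEquiv (Submodule.quotEquivOfEqBot _ (by simp))] at hq
    exact fun f hf hdf _ => hq f hf hdf
  | cons x rs ih =>
    obtain ⟨hx, hrs⟩ := (isWeaklyRegular_cons_iff N x rs).1 hrs
    rw [List.forall_mem_cons] at hrsI
    refine .of_quotSMulTop hc hrsI.1 hx (h _ (by omega)) <| ih hrs hrsI.2 (fun j hj => ?_) ?_
    · obtain ⟨j, rfl⟩ := Nat.exists_eq_add_of_lt hj
      exact (h _ (by omega)).quotSMulTop hc hx (h _ (by omega))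
    · rw [List.length_cons, Nat.add_comm rs.length, ← Nat.add_assoc] at hq
      exact (taylorExactAt_iff_of_linearEquiv
        (Submodule.quotOfListConsSMulTopEquivQuotSMulTopInner N x rs)).1 hq

variable {σ A : Type*} [CommRing A]

lemma isSMulRegular_X_quot_span_X {s : Set σ} {t : σ} (ht : t ∉ s) :
    IsSMulRegular (MvPolynomial σ A ⧸ Ideal.span (X '' s : Set (MvPolynomial σ A)))
      (X t : MvPolynomial σ A) := by
  refine (isSMulRegular_quotient_iff_mem_of_smul_mem _ _).2 fun q hq => ?_
  rw [smul_eq_mul, mem_ideal_span_X_image, support_X_mul] at hq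
  refine mem_ideal_span_X_image.2 fun β hβ => ?_
  obtain ⟨i, hi, hne⟩ := hq _ (mem_map_of_mem _ hβ)
  exact ⟨i, hi, by simpa [Finsupp.single_apply, show t ≠ i by rintro rfl; exact ht hi] using hne⟩

lemma isWeaklyRegular_map_X {l : List σ} (hl : l.Nodup) :
    IsWeaklyRegular (MvPolynomial σ A) (l.map (X : σ → MvPolynomial σ A)) := by
  refine ⟨fun i hi => ?_⟩
  rw [List.length_map] at hi
  have hspan : (Ideal.ofList ((l.map (X : σ → MvPolynomial σ A)).take i) • ⊤ :
      Ideal (MvPolynomial σ A)) = Ideal.span (X '' {t | t ∈ l.take i}) := by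
    rw [smul_eq_mul, Ideal.mul_top, Ideal.ofList, ← List.map_take]
    exact congrArg Ideal.span (Set.ext fun _ => List.mem_map)
  rw [hspan, List.getElem_map]
  exact isSMulRegular_X_quot_span_X fun h => by
    obtain ⟨j, hj, hji⟩ := List.mem_take_iff_getElem.1 h
    exact (lt_min_iff.1 hj).1.ne (hl.getElem_inj_iff.1 hji)

end Depth

section GenericForms

open RingTheory.Sequence MvPolynomial

variable {ι σ κ k : Type*} [LinearOrder ι] [Fintype ι] [Fintype κ] [Field k] {a : κ → ι → ℕ}
  {Z : κ → MvPolynomial σ k} {p : ℕ}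

/-- Outside the origin fewer than `card σ` of the forms vanish; those are independent, and the
others are units. -/
lemma idealOfVars_le_radical_colon [Fintype σ] (hlin : ∀ t, (Z t).IsHomogeneous 1)
    (hgen : ∀ W : Finset κ, #W ≤ Fintype.card σ → LinearIndependent k fun t : W => Z t)
    (hp : p ≠ 0) {f : Finset ι → MvPolynomial σ k}
    (hf : f ∈ taylorChains ι (MvPolynomial σ k) (MvPolynomial σ k) p)
    (hdf : taylorBoundary (lcmQuot a Z) (MvPolynomial σ k) f = 0) :
    idealOfVars σ k ≤
      ((LinearMap.range (taylorBoundary (lcmQuot a Z) (MvPolynomial σ k))).colon {f}).radical := by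
  classical
  rw [Ideal.radical_eq_sInf]
  refine le_sInf fun P ⟨hJP, hP⟩ => ?_
  let W : Finset κ := {t | Z t ∈ P}
  rcases le_or_gt (Fintype.card σ) #W with hW | hW
  · obtain ⟨V, hVW, hV⟩ := exists_subset_card_eq hW
    exact idealOfVars_le_of_linearIndependent (by simp [hV]) (fun t : V => hlin t) (hgen V hV.le)
      fun t => (mem_filter.1 (hVW t.2)).2
  · have hsplit : W.piecewise Z 1 * W.piecewise (1 : κ → MvPolynomial σ k) Z = Z := by
      ext1 t
      by_cases ht : t ∈ W <;> simp [ht]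
    have htors := lcmRatio_smul_mem_range (v := W.piecewise 1 Z)
      (taylorExactAt_lcmQuot_piecewise a W hlin (hgen W hW.le) hp) hf (by rwa [hsplit])
    rw [hsplit] at htors
    obtain ⟨t, -, ht⟩ := hP.prod_mem_iff.1 (hJP (Submodule.mem_colon_singleton.2 htors))
    have htP := hP.mem_of_pow_mem _ ht
    by_cases htW : t ∈ W
    · rw [piecewise_eq_of_mem _ _ _ htW] at htP
      exact absurd htP hP.one_notMem
    · rw [piecewise_eq_of_notMem _ _ _ htW] at htP
      exact absurd (mem_filter.2 ⟨mem_univ t, htP⟩) htW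

/-- Dévissage along the regular sequence of the variables, of length `card σ`. -/
lemma forall_taylorExactAt_iff_idealOfVars [Fintype σ] (hlin : ∀ t, (Z t).IsHomogeneous 1)
    (hgen : ∀ W : Finset κ, #W ≤ Fintype.card σ → LinearIndependent k fun t : W => Z t) :
    (∀ p ≠ 0, TaylorExactAt (lcmQuot a Z) (MvPolynomial σ k) p) ↔
      ∀ p > Fintype.card σ,
        TaylorExactAt (lcmQuot a Z) (MvPolynomial σ k ⧸ idealOfVars σ k) p := by
  have hc := isTaylorCoeff_lcmQuot a Z
  let rs : List (MvPolynomial σ k) := (univ : Finset σ).toList.map X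
  have hrs : IsWeaklyRegular (MvPolynomial σ k) rs := isWeaklyRegular_map_X (nodup_toList _)
  have hlength : rs.length = Fintype.card σ := by simp [rs]
  have hofList : (Ideal.ofList rs • ⊤ : Ideal (MvPolynomial σ k)) = idealOfVars σ k := by
    rw [smul_eq_mul, Ideal.mul_top, Ideal.ofList]
    congr 1
    ext
    simp [rs]
  constructor
  · intro h p hp
    rw [← hofList]
    exact TaylorExactAt.quot_ofList (q := 0) hc hrs (fun i hi => h i hi.ne') p (by omega)
  · intro h
    suffices ∀ d p, Fintype.card ι < p + d → p ≠ 0 →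
        TaylorExactAt (lcmQuot a Z) (MvPolynomial σ k) p from
      fun p hp => this (Fintype.card ι + 1) p (by omega) hp
    intro d
    induction d with
    | zero => exact fun p hp _ => taylorExactAt_of_card_lt hp
    | succ d ih =>
      intro p hd hp f hf hdf
      have hsoc : SocleExactAt (idealOfVars σ k) (lcmQuot a Z) (MvPolynomial σ k) p :=
        .of_quot_ofList hc hrs
          (fun x hx => by
            obtain ⟨t, -, rfl⟩ := List.mem_map.1 hx
            exact Ideal.subset_span ⟨t, rfl⟩)
          (fun i hi => ih i (by omega) (by omega)) (hofList ▸ h _ (by omega))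
      exact hsoc.mem_range_of_le_radical (idealOfVars_fg σ k) hf hdf
        (idealOfVars_le_radical_colon hlin hgen hp hf hdf)

lemma taylorExactAt_quot_idealOfVars_iff {A : Type*} [CommRing A] {z : κ → MvPolynomial σ A}
    (hz : ∀ t, constantCoeff (z t) = 0) :
    TaylorExactAt (lcmQuot a z) (MvPolynomial σ A ⧸ idealOfVars σ A) p ↔
      TaylorExactAt (lcmQuot a (0 : κ → A)) A p := by
  have hker : idealOfVars σ A = RingHom.ker (constantCoeff (σ := σ) (R := A)) := by
    ext q
    rw [RingHom.mem_ker, ← pow_one (idealOfVars σ A), mem_pow_idealOfVars_iff']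
    simp [constantCoeff_eq, Finsupp.degree_eq_zero_iff]
  obtain ⟨e, he⟩ : ∃ e : (MvPolynomial σ A ⧸ idealOfVars σ A) ≃+* A,
      ∀ q, e (Ideal.Quotient.mk _ q) = constantCoeff q := by
    rw [hker]
    exact ⟨(constantCoeff (σ := σ) (R := A)).quotientKerEquivOfRightInverse
      (constantCoeff_C σ), fun _ => rfl⟩
  refine taylorExactAt_congr (fun _ => e.toAddEquiv) fun τ i _ x => ?_
  have hc : lcmQuot a (0 : κ → A) (insert i τ) i = constantCoeff (lcmQuot a z (insert i τ) i) := by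
    rw [map_lcmQuot, show ⇑constantCoeff ∘ z = 0 from funext hz]
  obtain ⟨q, rfl⟩ := Ideal.Quotient.mk_surjective x
  have hsmul : lcmQuot a z (insert i τ) i • Ideal.Quotient.mk (idealOfVars σ A) q =
      Ideal.Quotient.mk _ (lcmQuot a z (insert i τ) i * q) := rfl
  change e _ = _ * e _
  rw [hc, hsmul, he, he, map_mul]

end GenericForms

universe u v

section Tor

open CategoryTheory TensorProduct

variable {ι R : Type*} [LinearOrder ι] [Fintype ι] [CommRing R] {c : Finset ι → ι → R} {p : ℕ}

lemma TaylorExactAt.finsupp (h : TaylorExactAt c R p) (B : Type*) :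
    TaylorExactAt c (B →₀ R) p := by
  classical
  intro f hf hdf
  have hcoord (b : B) : ∃ g, taylorBoundary c R g = (Finsupp.lapply (R := R) b).compLeft _ f :=
    h _ (compLeft_mem_taylorChains hf) (by rw [taylorBoundary_compLeft, hdf, map_zero])
  choose g hg using hcoord
  have hsum : f = ∑ b ∈ univ.biUnion fun σ => (f σ).support,
      (Finsupp.lsingle (R := R) b).compLeft _ (taylorBoundary c R (g b)) := by
    ext1 σ
    simp only [hg, Finset.sum_apply, LinearMap.compLeft_apply, Function.comp_apply,
      Finsupp.lapply_apply, Finsupp.lsingle_apply]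
    conv_lhs => rw [← Finsupp.sum_single (f σ), Finsupp.sum]
    refine sum_subset (subset_biUnion_of_mem (fun σ => (f σ).support) (mem_univ σ)) ?_
    intro b _ hb
    rw [Finsupp.notMem_support_iff.1 hb, Finsupp.single_zero]
  rw [hsum]
  exact sum_mem fun b _ => ⟨_, taylorBoundary_compLeft _⟩

lemma TaylorExactAt.of_projective (h : TaylorExactAt c R p) (P : Type*) [AddCommGroup P]
    [Module R P] [Module.Projective R P] : TaylorExactAt c P p := by
  obtain ⟨s, hs⟩ := (Module.projective_def' (R := R) (P := P)).1 inferInstance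
  intro f hf hdf
  obtain ⟨g, hg⟩ := h.finsupp P (s.compLeft _ f) (compLeft_mem_taylorChains hf) (by
    rw [taylorBoundary_compLeft, hdf, map_zero])
  refine ⟨(Finsupp.linearCombination R id).compLeft _ g, ?_⟩
  rw [taylorBoundary_compLeft, hg]
  ext σ
  exact LinearMap.congr_fun hs (f σ)

variable {M M' M'' N : Type*} [AddCommGroup M] [Module R M] [AddCommGroup M'] [Module R M']
  [AddCommGroup M''] [Module R M''] [AddCommGroup N] [Module R N]

lemma lTensor_quotient_injective_iff (I : Ideal R) (α : M →ₗ[R] N) :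
    Function.Injective (α.lTensor (R ⧸ I)) ↔
      ∀ x, α x ∈ I • (⊤ : Submodule R N) → x ∈ I • (⊤ : Submodule R M) := by
  rw [injective_iff_map_eq_zero,
    (TensorProduct.mk_surjective R M (R ⧸ I) Ideal.Quotient.mk_surjective).forall]
  simp only [← LinearMap.ker_tensorProductMk, LinearMap.mem_ker]
  rfl

lemma exact_comp_iff_injective {f : M'' →ₗ[R] M'} {π : M' →ₗ[R] M} {α : M →ₗ[R] N}
    (hπ : Function.Surjective π) (hf : Function.Exact f π) :
    Function.Exact f (α ∘ₗ π) ↔ Function.Injective α := by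
  rw [injective_iff_map_eq_zero, hπ.forall]
  refine forall_congr' fun y => ?_
  rw [← hf y]
  exact ⟨fun h => h.1, fun h => ⟨h, fun hy => by simp [hy]⟩⟩

lemma codRestrict_ker_surjective {π : M →ₗ[R] N} {δ : M' →ₗ[R] M} (h : Function.Exact δ π) :
    Function.Surjective (δ.codRestrict (LinearMap.ker π) h.apply_apply_eq_zero) := by
  rintro ⟨y, hy⟩
  obtain ⟨z, rfl⟩ := (h y).1 hy
  exact ⟨z, rfl⟩

lemma exact_codRestrict {f : M'' →ₗ[R] M'} {δ : M' →ₗ[R] M} (h : Function.Exact f δ)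
    (K : Submodule R M) (hδ : ∀ y, δ y ∈ K) : Function.Exact f (δ.codRestrict K hδ) := fun y => by
  rw [← h y]
  exact Subtype.ext_iff

lemma taylorExactAt_one_iff_exact_lTensor (hc : IsTaylorCoeff c) {π : M →ₗ[R] N}
    {δ₀ : M' →ₗ[R] M} {δ₁ : M'' →ₗ[R] M'} (hπ : Function.Surjective π)
    (h₀ : Function.Exact δ₀ π) (h₁ : Function.Exact δ₁ δ₀) (hM : TaylorExactAt c M 1) :
    TaylorExactAt c N 1 ↔
      Function.Exact (δ₁.lTensor (R ⧸ Ideal.span (Set.range fun i => c {i} i)))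
        (δ₀.lTensor (R ⧸ Ideal.span (Set.range fun i => c {i} i))) := by
  let δ := δ₀.codRestrict (LinearMap.ker π) h₀.apply_apply_eq_zero
  have hcomp : (LinearMap.ker π).subtype ∘ₗ δ = δ₀ := LinearMap.subtype_comp_codRestrict _ _ _
  have hδ : Function.Surjective δ := codRestrict_ker_surjective h₀
  rw [taylorExactAt_one_iff hc (LinearMap.ker π).injective_subtype hπ
    (LinearMap.exact_subtype_ker_map π) hM, ← lTensor_quotient_injective_iff,
    ← exact_comp_iff_injective (LinearMap.lTensor_surjective _ hδ)
      (lTensor_exact _ (exact_codRestrict h₁ _ _) hδ), ← LinearMap.lTensor_comp, hcomp]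

lemma taylorExactAt_succ_iff_exact_lTensor (hc : IsTaylorCoeff c) (N : Type v) [AddCommGroup N]
    [Module R N] (P : ℕ → Type v) [∀ j, AddCommGroup (P j)] [∀ j, Module R (P j)]
    {π : P 0 →ₗ[R] N} {δ : ∀ j, P (j + 1) →ₗ[R] P j} (hπ : Function.Surjective π)
    (h₀ : Function.Exact (δ 0) π) (hδ : ∀ j, Function.Exact (δ (j + 1)) (δ j))
    (hP : ∀ j, ∀ i ≠ 0, TaylorExactAt c (P j) i) (p : ℕ) :
    TaylorExactAt c N (p + 1) ↔
      Function.Exact ((δ (p + 1)).lTensor (R ⧸ Ideal.span (Set.range fun i => c {i} i)))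
        ((δ p).lTensor (R ⧸ Ideal.span (Set.range fun i => c {i} i))) := by
  induction p generalizing N P with
  | zero => exact taylorExactAt_one_iff_exact_lTensor hc hπ h₀ (hδ 0) (hP 0 1 one_ne_zero)
  | succ p ih =>
    have hshift : TaylorExactAt c N (p + 1 + 1) ↔ TaylorExactAt c (LinearMap.ker π) (p + 1) :=
      ⟨.of_exact_left hc (LinearMap.ker π).injective_subtype hπ (LinearMap.exact_subtype_ker_map π)
          (hP 0 _ p.succ_ne_zero),
        .of_exact_right hc (LinearMap.ker π).injective_subtype hπ
          (LinearMap.exact_subtype_ker_map π) (hP 0 _ (p + 1).succ_ne_zero)⟩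
    rw [hshift]
    exact ih (LinearMap.ker π) (fun j => P (j + 1))
      (π := (δ 0).codRestrict _ h₀.apply_apply_eq_zero) (δ := fun j => δ (j + 1))
      (codRestrict_ker_surjective h₀) (exact_codRestrict (hδ 0) _ _) (fun j => hδ (j + 1))
      (fun j => hP (j + 1))

lemma subsingleton_tor_succ_iff {R : Type u} [CommRing R] (M : ModuleCat.{u} R)
    {N : ModuleCat.{u} R} (P : ProjectiveResolution N) (p : ℕ) :
    Subsingleton (((Tor (ModuleCat.{u} R) (p + 1)).obj M).obj N) ↔
      Function.Exact ((P.complex.d (p + 2) (p + 1)).hom.lTensor M)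
        ((P.complex.d (p + 1) p).hom.lTensor M) := by
  rw [← ModuleCat.isZero_iff_subsingleton, Tor_obj,
    (P.isoLeftDerivedObj ((MonoidalCategory.tensoringLeft (ModuleCat.{u} R)).obj M)
      (p + 1)).isZero_iff]
  refine (HomologicalComplex.exactAt_iff_isZero_homology _ _).symm.trans ?_
  rw [HomologicalComplex.exactAt_iff' _ (p + 2) (p + 1) p (by simp) (by simp),
    ShortComplex.ShortExact.moduleCat_exact_iff_function_exact]
  rfl

lemma subsingleton_tor_succ_iff_taylorExactAt {R : Type u} [CommRing R] {c : Finset ι → ι → R}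
    (hc : IsTaylorCoeff c) (hR : ∀ i ≠ 0, TaylorExactAt c R i) (N : Type u) [AddCommGroup N]
    [Module R N] (p : ℕ) :
    Subsingleton (((Tor (ModuleCat.{u} R) (p + 1)).obj (ModuleCat.of R
      (R ⧸ Ideal.span (Set.range fun i => c {i} i)))).obj (ModuleCat.of R N)) ↔
      TaylorExactAt c N (p + 1) := by
  let P := ProjectiveResolution.of (ModuleCat.of R N)
  have hproj (j : ℕ) : Module.Projective R (P.complex.X j) :=
    (IsProjective.iff_projective (P.complex.X j)).2 (P.projective j)
  rw [subsingleton_tor_succ_iff _ P]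
  exact (taylorExactAt_succ_iff_exact_lTensor hc N (fun j => P.complex.X j)
    (π := (P.π.f 0).hom) (δ := fun j => (P.complex.d (j + 1) j).hom)
    ((ModuleCat.epi_iff_surjective (P.π.f 0)).1 inferInstance)
    ((ShortComplex.ShortExact.moduleCat_exact_iff_function_exact _).1 P.exact₀)
    (fun j => (ShortComplex.ShortExact.moduleCat_exact_iff_function_exact _).1 (P.exact_succ j))
    (fun j i hi => (hR i hi).of_projective _) p).symm

lemma subsingleton_tor_monomials_iff {κ A : Type u} [Fintype κ] [CommRing A] (a : κ → ι → ℕ)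
    (N : Type u) [AddCommGroup N] [Module (MvPolynomial κ A) N] (p : ℕ) :
    Subsingleton (((Tor (ModuleCat.{u} (MvPolynomial κ A)) (p + 1)).obj
      (ModuleCat.of (MvPolynomial κ A) (MvPolynomial κ A ⧸
        Ideal.span (Set.range fun j => ∏ t, (MvPolynomial.X t : MvPolynomial κ A) ^ a t j)))).obj
          (ModuleCat.of (MvPolynomial κ A) N)) ↔
      TaylorExactAt (lcmQuot a (MvPolynomial.X : κ → MvPolynomial κ A)) N (p + 1) := by
  rw [← subsingleton_tor_succ_iff_taylorExactAt (isTaylorCoeff_lcmQuot a _)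
    (fun i hi => taylorExactAt_lcmQuot_X a hi), funext fun j => lcmQuot_singleton j]

end Tor

section TaylorComplex

open MvPolynomial

variable {k : Type} [Field k] {n m p : ℕ} {c : Finset (Fin m) → Fin m → MvPolynomial (Fin n) k}

variable (k n m p) in
/-- Extension of a chain of the Taylor complex by zero to all subsets, which identifies
`TaylorMod k n m p` with `taylorChains (Fin m) S S p`. -/
noncomputable def taylorExtend :
    TaylorMod k n m p →ₗ[MvPolynomial (Fin n) k] (Finset (Fin m) → MvPolynomial (Fin n) k) :=
  Finsupp.lcoeFun ∘ₗ Finsupp.lmapDomain _ _ Subtype.val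

lemma taylorExtend_single (σ : {σ : Finset (Fin m) // #σ = p}) (x : MvPolynomial (Fin n) k) :
    taylorExtend k n m p (Finsupp.single σ x) = Pi.single σ.1 x := by
  simp [taylorExtend, Finsupp.mapDomain_single, Finsupp.single_eq_pi_single]

lemma taylorExtend_injective : Function.Injective (taylorExtend k n m p) :=
  DFunLike.coe_injective.comp (Finsupp.mapDomain_injective Subtype.val_injective)

lemma range_taylorExtend :
    LinearMap.range (taylorExtend k n m p) = taylorChains (Fin m) _ (MvPolynomial (Fin n) k) p := by
  refine le_antisymm ?_ fun f hf => ⟨Finsupp.equivFunOnFinite.symm fun σ => f σ, ?_⟩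
  · rintro _ ⟨F, rfl⟩ σ hσ
    exact Finsupp.mapDomain_of_notMem_range _ _ (by simpa using hσ)
  · ext1 σ
    by_cases hσ : #σ = p
    · exact Finsupp.mapDomain_apply (M := MvPolynomial (Fin n) k) Subtype.val_injective _
        (⟨σ, hσ⟩ : {σ : Finset (Fin m) // #σ = p})
    · rw [hf σ hσ]
      exact Finsupp.mapDomain_of_notMem_range _ _ (by simpa using hσ)

lemma taylorExtend_taylorD (F : TaylorMod k n m (p + 1)) :
    taylorExtend k n m p (taylorD k n m c (p + 1) F) =
      taylorBoundary c _ (taylorExtend k n m (p + 1) F) := by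
  suffices taylorExtend k n m p ∘ₗ taylorD k n m c (p + 1) =
      taylorBoundary c _ ∘ₗ taylorExtend k n m (p + 1) from LinearMap.congr_fun this F
  refine Finsupp.lhom_ext fun σ x => ?_
  have hsign : ∀ i, insertSign (σ.1.erase i) i = (-1) ^ #{j ∈ σ.1 | j < i} := fun i => by
    rw [insertSign, filter_erase, erase_eq_of_notMem (by simp)]
  rw [LinearMap.comp_apply, LinearMap.comp_apply, taylorExtend_single, taylorBoundary_single,
    taylorD, Finsupp.lsum_single, LinearMap.toSpanSingleton_apply, smul_sum, map_sum,
    ← sum_attach σ.1]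
  refine sum_congr rfl fun i _ => ?_
  rw [Finsupp.smul_single]
  refine (taylorExtend_single _ _).trans ?_
  rw [hsign, zsmul_eq_mul, smul_eq_mul, smul_eq_mul]
  push_cast
  ring_nf

lemma taylorExtend_zero (F : TaylorMod k n m 0) :
    taylorExtend k n m 0 F = Pi.single ∅ (taylorAug k n m F) := by
  suffices taylorExtend k n m 0 = LinearMap.single _ _ ∅ ∘ₗ taylorAug k n m from
    LinearMap.congr_fun this F
  refine Finsupp.lhom_ext fun σ x => ?_
  rw [taylorExtend_single, card_eq_zero.1 σ.2, LinearMap.comp_apply, taylorAug, Finsupp.lsum_single]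
  rfl

lemma ker_taylorD_eq_range_iff (hc : IsTaylorCoeff c) (hp : 1 ≤ p) :
    LinearMap.ker (taylorD k n m c p) = LinearMap.range (taylorD k n m c (p + 1)) ↔
      TaylorExactAt c (MvPolynomial (Fin n) k) p := by
  obtain ⟨q, rfl⟩ := Nat.exists_eq_add_of_le' hp
  have hker (F : TaylorMod k n m (q + 1)) : F ∈ LinearMap.ker (taylorD k n m c (q + 1)) ↔
      taylorBoundary c _ (taylorExtend k n m (q + 1) F) = 0 := by
    rw [← taylorExtend_taylorD, LinearMap.mem_ker]
    exact (map_eq_zero_iff _ taylorExtend_injective).symm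
  have hrange (F : TaylorMod k n m (q + 1)) :
      F ∈ LinearMap.range (taylorD k n m c (q + 1 + 1)) ↔
        taylorExtend k n m (q + 1) F ∈ LinearMap.range (taylorBoundary c _) := by
    constructor
    · rintro ⟨G, rfl⟩
      exact ⟨_, (taylorExtend_taylorD G).symm⟩
    · intro hF
      obtain ⟨g, hg, hgF⟩ :=
        exists_mem_chains_of_mem_range (range_taylorExtend.le ⟨F, rfl⟩) hF
      obtain ⟨G, rfl⟩ := range_taylorExtend.ge hg
      exact ⟨G, taylorExtend_injective ((taylorExtend_taylorD G).trans hgF)⟩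
  constructor
  · intro h f hf hdf
    obtain ⟨F, rfl⟩ := range_taylorExtend.ge hf
    exact (hrange F).1 (h.le ((hker F).2 hdf))
  · intro h
    ext F
    rw [hker, hrange]
    refine ⟨h _ (range_taylorExtend.le ⟨F, rfl⟩), ?_⟩
    rintro ⟨g, hg⟩
    rw [← hg, taylorBoundary_taylorBoundary hc]

lemma map_taylorAug_range_taylorD :
    (LinearMap.range (taylorD k n m c 1)).map (taylorAug k n m) =
      Ideal.span (Set.range fun i => c {i} i) := by
  ext x
  have hx : (Pi.single ∅ x : Finset (Fin m) → MvPolynomial (Fin n) k) ∈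
      taylorChains (Fin m) (MvPolynomial (Fin n) k) _ 0 :=
    fun σ hσ => Pi.single_eq_of_ne (by rintro rfl; exact hσ card_empty) _
  have hspan := mem_range_taylorBoundary_iff_of_mem_chains_zero (c := c) hx
  rw [Pi.single_eq_same, smul_eq_mul, Ideal.mul_top] at hspan
  rw [← hspan]
  constructor
  · rintro ⟨_, ⟨F, rfl⟩, rfl⟩
    exact ⟨_, (taylorExtend_taylorD F).symm.trans (taylorExtend_zero _)⟩
  · intro h
    obtain ⟨g, hg, hgx⟩ := exists_mem_chains_of_mem_range hx h
    obtain ⟨F, rfl⟩ := range_taylorExtend.ge hg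
    have haug := (taylorExtend_zero _).symm.trans ((taylorExtend_taylorD F).trans hgx)
    exact ⟨_, ⟨F, rfl⟩, Pi.single_injective ∅ haug⟩

lemma isTaylorResolution_iff {Q : Fin m → MvPolynomial (Fin n) k}
    {L : Finset (Fin m) → MvPolynomial (Fin n) k} (hL0 : ∀ σ, L σ ≠ 0)
    (hL : ∀ σ q, L σ ∣ q ↔ ∀ i ∈ σ, Q i ∣ q)
    (hc : ∀ τ, ∀ i ∉ τ, c (insert i τ) i * L τ = L (insert i τ)) :
    IsTaylorResolution k n m Q c ↔ ∀ p ≠ 0, TaylorExactAt c (MvPolynomial (Fin n) k) p := by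
  have hcQ (i : Fin m) : Associated (c {i} i) (Q i) := by
    have hL1 : IsUnit (L ∅) := isUnit_of_dvd_one ((hL ∅ 1).2 (by simp))
    have hLQ : Associated (L {i}) (Q i) :=
      associated_of_dvd_dvd ((hL _ _).2 (by simp)) ((hL _ _).1 dvd_rfl i (mem_singleton_self i))
    refine Associated.trans ⟨hL1.unit, ?_⟩ hLQ
    exact hc ∅ i (notMem_empty i)
  have hspan : Ideal.span (Set.range fun i => c {i} i) = Ideal.span (Set.range Q) := by
    simp only [← Set.iUnion_singleton_eq_range, Ideal.span_iUnion,
      Ideal.span_singleton_eq_span_singleton.2 (hcQ _)]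
  rw [IsTaylorResolution, map_taylorAug_range_taylorD, hspan]
  simp only [and_true, ← Nat.one_le_iff_ne_zero]
  exact forall₂_congr fun p hp => ker_taylorD_eq_range_iff (isTaylorCoeff_of_insert_mul hL0 hc) hp

lemma isTaylorResolution_iff_lcmQuot {r : ℕ} {Q : Fin m → MvPolynomial (Fin n) k}
    {L : Finset (Fin m) → MvPolynomial (Fin n) k} (hL : ∀ σ q, L σ ∣ q ↔ ∀ i ∈ σ, Q i ∣ q)
    (hc : ∀ τ, ∀ i ∉ τ, c (insert i τ) i * L τ = L (insert i τ))
    {Z : Fin r → MvPolynomial (Fin n) k} (hZ0 : ∀ i, Z i ≠ 0)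
    (hZrel : Pairwise (Function.onFun IsRelPrime Z)) {a : Fin r → Fin m → ℕ}
    (hQ : ∀ j, Q j = ∏ i, Z i ^ a i j) :
    IsTaylorResolution k n m Q c ↔
      ∀ p ≠ 0, TaylorExactAt (lcmQuot a Z) (MvPolynomial (Fin n) k) p := by
  have hlcm (σ q) : lcmRatio a Z σ ∅ ∣ q ↔ L σ ∣ q := by
    simp only [lcmRatio_empty_dvd_iff hZrel, hL, hQ]
  have hassoc (σ) : Associated (lcmRatio a Z σ ∅) (L σ) :=
    associated_of_dvd_dvd ((hlcm _ _).2 dvd_rfl) ((hlcm _ _).1 dvd_rfl)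
  have hL0 (σ) : L σ ≠ 0 := (hassoc σ).ne_zero_iff.1 <|
    prod_ne_zero_iff.2 fun i _ => pow_ne_zero _ (hZ0 i)
  rw [isTaylorResolution_iff hL0 hL hc]
  exact forall₂_congr fun p _ => taylorExactAt_iff_of_associated hL0 hassoc hc fun τ i hi =>
    lcmQuot_insert_mul hi (empty_subset τ)

end TaylorComplex

open CategoryTheory MvPolynomial in
theorem taylor_resolution_iff_tor_vanishing_general (k : Type) [Field k]
    (n m r : ℕ)
    (Q : Fin m → MvPolynomial (Fin n) k)
    (L : Finset (Fin m) → MvPolynomial (Fin n) k)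
    (hLdvd : ∀ σ, ∀ i ∈ σ, Q i ∣ L σ)
    (hLlcm : ∀ σ t, (∀ i ∈ σ, Q i ∣ t) → L σ ∣ t)
    (c : Finset (Fin m) → Fin m → MvPolynomial (Fin n) k)
    (hc : ∀ σ, ∀ i ∈ σ, c σ i * L (σ.erase i) = L σ)
    (Z : Fin r → MvPolynomial (Fin n) k)
    (hZlin : ∀ i, IsHomogeneous (Z i) 1)
    (hZ0 : ∀ i, Z i ≠ 0)
    (hZprop : ∀ i j, i ≠ j → ∀ a : k, Z i ≠ a • Z j)
    (hZgen : ∀ s : Finset (Fin r), s.card ≤ n →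
      LinearIndependent k (fun i : s => Z i.1))
    (a : Fin r → Fin m → ℕ)
    (hQdef : ∀ j, Q j = ∏ i, Z i ^ a i j) :
    IsTaylorResolution k n m Q c ↔
      ∀ p : ℕ, n + 1 ≤ p →
        Subsingleton
          (((Tor (ModuleCat (MvPolynomial (Fin r) k)) p).obj
              (ModuleCat.of (MvPolynomial (Fin r) k)
                (MvPolynomial (Fin r) k ⧸
                  Ideal.span (Set.range fun j =>
                    ∏ i, (X i : MvPolynomial (Fin r) k) ^ a i j)))).obj
            (ModuleCat.of (MvPolynomial (Fin r) k)
              (MvPolynomial (Fin r) k ⧸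
                Ideal.span (Set.range (X :
                  Fin r → MvPolynomial (Fin r) k))))) := by
  have hZrel : Pairwise (Function.onFun IsRelPrime Z) := fun i j hij =>
    isRelPrime_of_isHomogeneous_one (hZlin i) (hZlin j) (hZ0 i) (hZ0 j) (hZprop j i hij.symm)
  have hL (σ q) : L σ ∣ q ↔ ∀ i ∈ σ, Q i ∣ q :=
    ⟨fun h i hi => (hLdvd σ i hi).trans h, hLlcm σ q⟩
  have hc' (τ i) (hi : i ∉ τ) : c (insert i τ) i * L τ = L (insert i τ) := by
    simpa only [erase_insert hi] using hc _ i (mem_insert_self i τ)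
  have hconst (i) : constantCoeff (Z i) = 0 := (hZlin i).coeff_eq_zero (by simp)
  rw [isTaylorResolution_iff_lcmQuot hL hc' hZ0 hZrel hQdef,
    forall_taylorExactAt_iff_idealOfVars hZlin (by simpa using hZgen), Fintype.card_fin]
  refine forall₂_congr fun p hp => ?_
  obtain ⟨q, rfl⟩ := Nat.exists_eq_add_of_le' (Nat.one_le_of_lt hp)
  exact (taylorExactAt_quot_idealOfVars_iff hconst).trans <|
    (taylorExactAt_quot_idealOfVars_iff (constantCoeff_X k)).symm.trans
      (subsingleton_tor_monomials_iff a _ q).symm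

open CategoryTheory in
/-- `k` algebraically closed, `E = {Z_1,…,Z_r}` generic pairwise
non-proportional homogeneous linear forms, and each `Q j = ∏ i, Z i ^ a i j`.  With
`S̃ = k[y_1,…,y_r]`, `Q̃ j = ∏ i, y i ^ a i j` and `Ĩ = (Q̃_1,…,Q̃_m)`, the Taylor
complex of `𝒜` is a resolution of `S/I` iff `Tor_p^{S̃}(S̃/Ĩ, k) = 0` for all
`p ≥ n + 1`, where `k = S̃/(y_1,…,y_r)`. -/
theorem taylor_resolution_iff_tor_vanishing (k : Type) [Field k] [IsAlgClosed k]
    (n m r : ℕ)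
    (Q : Fin m → MvPolynomial (Fin n) k)
    (hQ0 : ∀ i, Q i ≠ 0)
    (hQhom : ∀ i, ∃ d, (Q i).IsHomogeneous d)
    (hQdvd : ∀ i j, i ≠ j → ¬ Q i ∣ Q j)
    (L : Finset (Fin m) → MvPolynomial (Fin n) k)
    (hLdvd : ∀ σ, ∀ i ∈ σ, Q i ∣ L σ)
    (hLlcm : ∀ σ t, (∀ i ∈ σ, Q i ∣ t) → L σ ∣ t)
    (c : Finset (Fin m) → Fin m → MvPolynomial (Fin n) k)
    (hc : ∀ σ, ∀ i ∈ σ, c σ i * L (σ.erase i) = L σ)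
    (Z : Fin r → MvPolynomial (Fin n) k)
    (hZlin : ∀ i, MvPolynomial.IsHomogeneous (Z i) 1)
    (hZ0 : ∀ i, Z i ≠ 0)
    (hZprop : ∀ i j, i ≠ j → ∀ a : k, Z i ≠ a • Z j)
    (hZgen : ∀ s : Finset (Fin r), s.card ≤ n →
      LinearIndependent k (fun i : s => Z i.1))
    (a : Fin r → Fin m → ℕ)
    (hQdef : ∀ j, Q j = ∏ i, Z i ^ a i j) :
    IsTaylorResolution k n m Q c ↔
      ∀ p : ℕ, n + 1 ≤ p →
        Subsingleton
          (((Tor (ModuleCat (MvPolynomial (Fin r) k)) p).obj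
              (ModuleCat.of (MvPolynomial (Fin r) k)
                (MvPolynomial (Fin r) k ⧸
                  Ideal.span (Set.range fun j =>
                    ∏ i, (MvPolynomial.X i : MvPolynomial (Fin r) k) ^ a i j)))).obj
            (ModuleCat.of (MvPolynomial (Fin r) k)
              (MvPolynomial (Fin r) k ⧸
                Ideal.span (Set.range (MvPolynomial.X :
                  Fin r → MvPolynomial (Fin r) k))))) :=
  taylor_resolution_iff_tor_vanishing_general k n m r Q L hLdvd hLlcm c hc Z hZlin hZ0 hZprop
    hZgen a hQdef
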